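/- Relative entropy of morphisms in FinStat is convex linear. Precisely: let (X, p) be a finite probability space, and for each x ∈ X let U^x, V^x be finite sets, μ^x : U^x → V^x a function, q^x a probability distribution on U^x, and s^x : V^x ⇝ U^x a stochastic section of μ^x. On the disjoint unions ∐_x U^x and ∐_x V^x, form the distribution (x,u) ↦ p_x q^x_u, the function ⊕_x μ^x : (x,u) ↦ (x, μ^x(u)), and the section ⊕_x s^x (equal to s^x on the x-th components and 0 between different components). Then, as an identity in [0,∞], D( ⊕_x p_x q^x, (⊕_x s^x)∘((⊕_x μ^x)∘(⊕_x p_x q^x)) ) = ∑_{x∈X} p_x D( q^x, s^x∘(μ^x∘q^x) ). -/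

import Mathlib

open scoped ENNReal BigOperators

/-- A probability distribution on a finite set `X`. -/
def IsDist {X : Type*} [Fintype X] (p : X → ℝ) : Prop :=
  (∀ x, 0 ≤ p x) ∧ ∑ x, p x = 1

/-- A channel from `X` to `Y`; `f y x` is the probability of output `y` given input `x`. -/
def IsChannel {X Y : Type*} [Fintype Y] (f : Y → X → ℝ) : Prop :=
  (∀ y x, 0 ≤ f y x) ∧ ∀ x, ∑ y, f y x = 1

/-- Composite of channels: `(g ∘ f) z x = ∑ y, g z y * f y x`. -/
noncomputable def chComp {X Y Z : Type*} [Fintype Y]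
    (g : Z → Y → ℝ) (f : Y → X → ℝ) : Z → X → ℝ :=
  fun z x => ∑ y, g z y * f y x

/-- The pure (deterministic) channel associated to a function. -/
def pureCh {X Y : Type*} [DecidableEq Y] (φ : X → Y) : Y → X → ℝ :=
  fun y x => if y = φ x then 1 else 0

/-- Pushforward of a distribution along a channel. -/
noncomputable def push {X Y : Type*} [Fintype X] (f : Y → X → ℝ) (p : X → ℝ) : Y → ℝ :=
  fun y => ∑ x, f y x * p x

/-- The identity channel. -/
def idChan {X : Type*} [DecidableEq X] : X → X → ℝ :=
  fun x x' => if x = x' then 1 else 0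

/-- `s : Y ⇝ X` is a stochastic section of `φ : X → Y` if it is a channel and `φ ∘ s = id_Y`. -/
def IsSection {X Y : Type*} [Fintype X] [Fintype Y] [DecidableEq Y]
    (φ : X → Y) (s : X → Y → ℝ) : Prop :=
  IsChannel s ∧ chComp (pureCh φ) s = idChan

open scoped Classical in
/-- Relative entropy `D(p,q) ∈ [0,∞]`, with the conventions `0·log(0/q) = 0` and
`p·log(p/0) = ∞` for `p ≠ 0`. -/
noncomputable def relEnt {X : Type*} [Fintype X] (p q : X → ℝ) : ℝ≥0∞ :=
  if ∀ x, p x ≠ 0 → q x ≠ 0 then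
    ENNReal.ofReal (∑ x, if p x = 0 then 0 else p x * Real.log (p x / q x))
  else ⊤

/-- The direct sum of a family of channels `f x : A x ⇝ B x` over disjoint unions,
equal to `f x` on the `x`-th components and `0` between different components. -/
def dSum {X : Type*} [DecidableEq X] {A B : X → Type*}
    (f : ∀ x, B x → A x → ℝ) : (Σ x, B x) → (Σ x, A x) → ℝ :=
  fun b a => if h : a.1 = b.1 then f b.1 b.2 (h ▸ a.2) else 0

/-!
Relative entropy is positively homogeneous, `D(c p, c q) = c D(p, q)`, and additive over disjoint
unions. The comparison distribution on `∐ₓ Uₓ` is computed componentwise, and pushing forward is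
linear, so its `x`-th component is `p x` times the comparison distribution for `q x`.

Additivity takes care because `ENNReal.ofReal` truncates negative reals to `0`, so it turns a sum
into a sum only if the entropy of each component is nonnegative. This is Gibbs' inequality, which
applies because channels preserve mass.
-/

section Push

variable {X Y : Type*} [Fintype X]

theorem push_const_mul (f : Y → X → ℝ) (c : ℝ) (p : X → ℝ) :
    push f (fun x => c * p x) = fun y => c * push f p y := by
  funext y
  simp only [push, Finset.mul_sum, mul_left_comm]

variable [Fintype Y] {f : Y → X → ℝ}

theorem IsChannel.push_nonneg (hf : IsChannel f) {p : X → ℝ} (hp : ∀ x, 0 ≤ p x) (y : Y) :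
    0 ≤ push f p y :=
  Finset.sum_nonneg fun x _ => mul_nonneg (hf.1 y x) (hp x)

theorem IsChannel.sum_push (hf : IsChannel f) (p : X → ℝ) : ∑ y, push f p y = ∑ x, p x := by
  unfold push
  rw [Finset.sum_comm]
  simp_rw [← Finset.sum_mul, hf.2, one_mul]

end Push

theorem isChannel_pureCh {X Y : Type*} [Fintype Y] [DecidableEq Y] (φ : X → Y) :
    IsChannel (pureCh φ) := by
  refine ⟨fun y x => ?_, fun x => ?_⟩
  · unfold pureCh
    positivity
  · simp [pureCh]

section DirectSum

variable {X : Type*} [DecidableEq X] {A B : X → Type*}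

theorem push_dSum [Fintype X] [∀ x, Fintype (A x)] (f : ∀ x, B x → A x → ℝ)
    (P : (Σ x, A x) → ℝ) (x : X) (b : B x) :
    push (dSum f) P ⟨x, b⟩ = push (f x) (fun a => P ⟨x, a⟩) b := by
  unfold push
  rw [Fintype.sum_sigma, Fintype.sum_eq_single x]
  · simp [dSum]
  · intro y hy
    simp [dSum, hy]

theorem dSum_pureCh [∀ x, DecidableEq (B x)] (φ : ∀ x, A x → B x) :
    dSum (fun x => pureCh (φ x)) =
      pureCh (fun a : Σ x, A x => (⟨a.1, φ a.1 a.2⟩ : Σ x, B x)) := by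
  funext ⟨y, b⟩ ⟨x, a⟩
  rcases eq_or_ne x y with rfl | hxy
  · simp [dSum, pureCh]
  · simp [dSum, pureCh, hxy, hxy.symm]

end DirectSum

theorem sub_le_mul_log_div {a b : ℝ} (ha : 0 ≤ a) (hb : 0 ≤ b) (hab : a ≠ 0 → b ≠ 0) :
    a - b ≤ a * Real.log (a / b) := by
  rcases ha.eq_or_lt with rfl | ha
  · simpa using hb
  · have hb : 0 < b := hb.lt_of_ne' (hab ha.ne')
    calc a - b = a * (1 - (a / b)⁻¹) := by field_simp
      _ ≤ a * Real.log (a / b) := by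
        gcongr
        exact Real.one_sub_inv_le_log_of_pos (div_pos ha hb)

theorem sum_mul_log_div_nonneg {X : Type*} [Fintype X] {p q : X → ℝ} (hp : ∀ x, 0 ≤ p x)
    (hq : ∀ x, 0 ≤ q x) (hpq : ∀ x, p x ≠ 0 → q x ≠ 0) (hsum : ∑ x, q x ≤ ∑ x, p x) :
    0 ≤ ∑ x, p x * Real.log (p x / q x) :=
  calc 0 ≤ ∑ x, p x - ∑ x, q x := sub_nonneg.2 hsum
    _ = ∑ x, (p x - q x) := (Finset.sum_sub_distrib ..).symm
    _ ≤ ∑ x, p x * Real.log (p x / q x) :=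
      Finset.sum_le_sum fun x _ => sub_le_mul_log_div (hp x) (hq x) (hpq x)

section RelEnt

variable {X : Type*} [Fintype X] {p q : X → ℝ}

theorem relEnt_eq_ofReal_sum (hpq : ∀ x, p x ≠ 0 → q x ≠ 0) :
    relEnt p q = ENNReal.ofReal (∑ x, p x * Real.log (p x / q x)) := by
  rw [relEnt, if_pos hpq]
  congr! 2 with x
  split_ifs with hx <;> simp [hx]

theorem relEnt_eq_top_iff : relEnt p q = ⊤ ↔ ∃ x, p x ≠ 0 ∧ q x = 0 := by
  simp [relEnt]

theorem relEnt_const_mul {c : ℝ} (hc : 0 ≤ c) (p q : X → ℝ) :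
    relEnt (fun x => c * p x) (fun x => c * q x) = ENNReal.ofReal c * relEnt p q := by
  rcases hc.eq_or_lt with rfl | hc
  · simp [relEnt]
  by_cases hpq : ∀ x, p x ≠ 0 → q x ≠ 0
  · have hcpq : ∀ x, c * p x ≠ 0 → c * q x ≠ 0 := by simpa [hc.ne'] using hpq
    rw [relEnt_eq_ofReal_sum hcpq, relEnt_eq_ofReal_sum hpq, ← ENNReal.ofReal_mul hc.le,
      Finset.mul_sum]
    simp only [mul_div_mul_left _ _ hc.ne', mul_assoc]
  · have htop : relEnt p q = ⊤ := relEnt_eq_top_iff.2 (by simpa using hpq)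
    rw [htop, ENNReal.mul_top (by simpa using hc)]
    exact relEnt_eq_top_iff.2 (by simpa [hc.ne'] using hpq)

theorem relEnt_sigma {U : X → Type*} [∀ x, Fintype (U x)] {P Q : (Σ x, U x) → ℝ}
    (hP : ∀ u, 0 ≤ P u) (hQ : ∀ u, 0 ≤ Q u) (hsum : ∀ x, ∑ u, Q ⟨x, u⟩ ≤ ∑ u, P ⟨x, u⟩) :
    relEnt P Q = ∑ x, relEnt (fun u => P ⟨x, u⟩) (fun u => Q ⟨x, u⟩) := by
  by_cases hPQ : ∀ u, P u ≠ 0 → Q u ≠ 0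
  · have hnonneg (x : X) : 0 ≤ ∑ u, P ⟨x, u⟩ * Real.log (P ⟨x, u⟩ / Q ⟨x, u⟩) :=
      sum_mul_log_div_nonneg (fun u => hP ⟨x, u⟩) (fun u => hQ ⟨x, u⟩) (fun u => hPQ ⟨x, u⟩)
        (hsum x)
    rw [relEnt_eq_ofReal_sum hPQ, Fintype.sum_sigma,
      ENNReal.ofReal_sum_of_nonneg fun x _ => hnonneg x]
    exact Finset.sum_congr rfl fun x _ => (relEnt_eq_ofReal_sum fun u => hPQ ⟨x, u⟩).symm
  · obtain ⟨⟨x, u⟩, hPu, hQu⟩ : ∃ u, P u ≠ 0 ∧ Q u = 0 := by simpa using hPQ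
    rw [relEnt_eq_top_iff.2 ⟨⟨x, u⟩, hPu, hQu⟩, eq_comm]
    exact ENNReal.sum_eq_top.2 ⟨x, Finset.mem_univ x, relEnt_eq_top_iff.2 ⟨u, hPu, hQu⟩⟩

end RelEnt

theorem relEnt_FinStat_convex_linear_general {X : Type*} [Fintype X] [DecidableEq X]
    {U V : X → Type*} [∀ x, Fintype (U x)] [∀ x, Fintype (V x)]
    (p : X → ℝ) (f : ∀ x, V x → U x → ℝ) (q : ∀ x, U x → ℝ) (s : ∀ x, U x → V x → ℝ)
    (hp : ∀ x, 0 ≤ p x) (hq : ∀ x u, 0 ≤ q x u)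
    (hf : ∀ x, IsChannel (f x)) (hs : ∀ x, IsChannel (s x)) :
    relEnt (fun u : Σ x, U x => p u.1 * q u.1 u.2)
        (push (dSum s) (push (dSum f) (fun u : Σ x, U x => p u.1 * q u.1 u.2)))
      = ∑ x, ENNReal.ofReal (p x) * relEnt (q x) (push (s x) (push (f x) (q x))) := by
  have hpq (x : X) (u : U x) : 0 ≤ p x * q x u := mul_nonneg (hp x) (hq x u)
  rw [relEnt_sigma]
  · simp only [push_dSum, push_const_mul, relEnt_const_mul (hp _)]
  · exact fun u => hpq u.1 u.2
  · rintro ⟨x, u⟩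
    simp only [push_dSum]
    exact (hs x).push_nonneg ((hf x).push_nonneg (hpq x)) u
  · intro x
    simp only [push_dSum, (hs x).sum_push, (hf x).sum_push, le_refl]

/-- Relative entropy of morphisms in FinStat is convex linear. -/
theorem relEnt_FinStat_convex_linear {X : Type*} [Fintype X] [DecidableEq X]
    {U V : X → Type*} [∀ x, Fintype (U x)] [∀ x, Fintype (V x)]
    [∀ x, DecidableEq (V x)]
    (p : X → ℝ) (μ : ∀ x, U x → V x) (q : ∀ x, U x → ℝ) (s : ∀ x, U x → V x → ℝ)
    (hp : IsDist p) (hq : ∀ x, IsDist (q x))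
    (hs : ∀ x, IsSection (μ x) (s x)) :
    relEnt (fun u : Σ x, U x => p u.1 * q u.1 u.2)
        (push (dSum s)
          (push (pureCh (fun u : Σ x, U x => (⟨u.1, μ u.1 u.2⟩ : Σ x, V x)))
            (fun u : Σ x, U x => p u.1 * q u.1 u.2)))
      = ∑ x, ENNReal.ofReal (p x) *
          relEnt (q x) (push (s x) (push (pureCh (μ x)) (q x))) := by
  rw [← dSum_pureCh]
  exact relEnt_FinStat_convex_linear_general p _ q s hp.1 (fun x => (hq x).1)
    (fun x => isChannel_pureCh (μ x)) (fun x => (hs x).1)
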